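/- arXiv:2510.18628 — 5 statements merged into one kernel-verified Lean document; each statement's English description precedes it below -/
import Mathlib

section
/- Order-independence of rectification by non-conflicting rules: let F be a Boolean function over X, Th a Boolean function over X (the domain theory), and R₁ = (b₁ ⇒ h₁), R₂ = (b₂ ⇒ h₂) two classification rules. Define single-rule rectification by F ★ (b ⇒ y) = F ∨ b and F ★ (b ⇒ ȳ) = F ∧ ¬b (pointwise). If R₁ and R₂ do not conflict given Th — that is, if h₁ ≠ h₂ then no assignment satisfies b₁, b₂ and Th simultaneously — then for every assignment v satisfying Th, ((F ★ R₁) ★ R₂)(v) = ((F ★ R₂) ★ R₁)(v). -/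
/-- An assignment satisfies a literal `(x, p)` iff it gives `x` the value `p`. -/
def satLit {V : Type*} (v : V → Bool) (ℓ : V × Bool) : Prop := v ℓ.1 = ℓ.2

/-- An assignment satisfies a term iff it satisfies every literal of it. -/
def satTerm {V : Type*} (v : V → Bool) (t : Finset (V × Bool)) : Prop :=
  ∀ ℓ ∈ t, satLit v ℓ

instance {V : Type*} (v : V → Bool) (t : Finset (V × Bool)) : Decidable (satTerm v t) :=
  inferInstanceAs (Decidable (∀ ℓ ∈ t, v ℓ.1 = ℓ.2))

/-- The indicator Boolean function of a term. -/
def indTerm {V : Type*} (t : Finset (V × Bool)) (v : V → Bool) : Bool :=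
  decide (satTerm v t)

/-- A classification rule: a body (a term) and a head (`true` for `y`, `false` for `ȳ`). -/
structure ClassRule (V : Type*) where
  body : Finset (V × Bool)
  head : Bool

/-- Single-rule rectification: `F ★ (b ⇒ y) = F ∨ b` and `F ★ (b ⇒ ȳ) = F ∧ ¬b`,
pointwise. -/
def rectify {V : Type*} (F : (V → Bool) → Bool) (R : ClassRule V) : (V → Bool) → Bool :=
  fun v => if R.head then F v || indTerm R.body v else F v && !(indTerm R.body v)

/-- Order-independence of rectification by non-conflicting rules: if the rules `R₁` and
`R₂` do not conflict given the domain theory `Th` (whenever their heads differ, no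
assignment satisfies both bodies together with `Th`), then on every assignment
satisfying `Th`, rectifying by `R₁` then `R₂` agrees with rectifying by `R₂` then `R₁`. -/
theorem rectify_order_independent {V : Type*}
    (F Th : (V → Bool) → Bool) (R1 R2 : ClassRule V)
    (hnc : R1.head ≠ R2.head →
      ¬ ∃ v : V → Bool, satTerm v R1.body ∧ satTerm v R2.body ∧ Th v = true) :
    ∀ v : V → Bool, Th v = true →
      rectify (rectify F R1) R2 v = rectify (rectify F R2) R1 v := by
  intro v hv
  have h : R1.head ≠ R2.head → ¬ (satTerm v R1.body ∧ satTerm v R2.body) :=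
    fun hne hb => hnc hne ⟨v, hb.1, hb.2, hv⟩
  unfold rectify indTerm
  by_cases h1 : satTerm v R1.body <;> by_cases h2 : satTerm v R2.body <;>
    cases e1 : R1.head <;> cases e2 : R2.head <;> cases F v <;> simp_all
end

section
/- Rectifying a random forest by a classification rule amounts to rectifying each of its trees: let F = [T₁, …, T_m] be a random forest over X (majority vote of the Boolean functions Tᵢ) and b a term over X. Then for every assignment v: (i) the majority vote of [T₁ ∨ b, …, T_m ∨ b] at v equals (F ∨ b)(v), where F ∨ b is the rectification of F by b ⇒ y; and (ii) the majority vote of [T₁ ∧ ¬b, …, T_m ∧ ¬b] at v equals (F ∧ ¬b)(v), where F ∧ ¬b is the rectification of F by b ⇒ ȳ. -/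
/-- The majority vote of a random forest (a list of trees, each viewed as a Boolean
function) at an assignment `v`: true iff strictly more than half of the trees output
true at `v`. -/
def majority {V : Type*} (F : List ((V → Bool) → Bool)) (v : V → Bool) : Bool :=
  decide (F.length < 2 * F.countP (fun T => T v))

/-- Rectifying a random forest by a classification rule amounts to rectifying each of
its trees: (i) the majority vote of `[T₁ ∨ b, …, T_m ∨ b]` equals `F ∨ b`, the
rectification of `F` by `b ⇒ y`; (ii) the majority vote of `[T₁ ∧ ¬b, …, T_m ∧ ¬b]`
equals `F ∧ ¬b`, the rectification of `F` by `b ⇒ ȳ`. -/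
theorem forest_rectification_treewise {V : Type*}
    (F : List ((V → Bool) → Bool)) (hF : F ≠ [])
    (b : Finset (V × Bool)) (v : V → Bool) :
    (majority (F.map (fun T => fun w => T w || indTerm b w)) v
        = (majority F v || indTerm b v)) ∧
    (majority (F.map (fun T => fun w => T w && !(indTerm b w))) v
        = (majority F v && !(indTerm b v))) := by
  have hl : 0 < F.length := List.length_pos_iff.mpr hF
  cases h : indTerm b v
  · simp [majority, List.countP_map, Function.comp_def, h]
  · simp [majority, List.countP_map, Function.comp_def, h]
    omega
end

section
/- A UP-majoritary reason is an abductive explanation: let Φ₁, …, Φ_m be CNF formulas over X, Th a CNF theory over X, and F the Boolean function whose value at v is true iff strictly more than m/2 of the Φᵢ are satisfied by v. Let x be an assignment with F(x) = true and let t be a term satisfied by x such that t is a UP-implicant given Th of at least ⌊m/2⌋ + 1 of the Φᵢ. Then every assignment satisfying t and Th satisfies F; in particular t is an abductive explanation for x given (F, Th). -/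
instance {V : Type*} (v : V → Bool) (ℓ : V × Bool) : Decidable (satLit v ℓ) :=
  inferInstanceAs (Decidable (v ℓ.1 = ℓ.2))

/-- An assignment satisfies a clause iff it satisfies some literal of it. -/
def satClause {V : Type*} (v : V → Bool) (δ : Finset (V × Bool)) : Prop :=
  ∃ ℓ ∈ δ, satLit v ℓ

instance {V : Type*} (v : V → Bool) (δ : Finset (V × Bool)) : Decidable (satClause v δ) :=
  inferInstanceAs (Decidable (∃ ℓ ∈ δ, satLit v ℓ))

/-- An assignment satisfies a CNF iff it satisfies every clause of it. -/
def satCNF {V : Type*} (v : V → Bool) (Φ : Finset (Finset (V × Bool))) : Prop :=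
  ∀ δ ∈ Φ, satClause v δ

instance {V : Type*} (v : V → Bool) (Φ : Finset (Finset (V × Bool))) :
    Decidable (satCNF v Φ) :=
  inferInstanceAs (Decidable (∀ δ ∈ Φ, satClause v δ))

/-- The complementary literal. -/
def litCompl {V : Type*} (ℓ : V × Bool) : V × Bool := (ℓ.1, !ℓ.2)

/-- Derivability of a literal by unit propagation from a CNF theory `Th`. -/
inductive UPDeriv {V : Type*} (Th : Finset (Finset (V × Bool))) : V × Bool → Prop
  | step (δ : Finset (V × Bool)) (ℓ : V × Bool) (hδ : δ ∈ Th)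
      (h : ∀ ℓ' ∈ δ, ℓ' ≠ ℓ → UPDeriv Th (litCompl ℓ')) : UPDeriv Th ℓ

/-- A term `t` is a UP-implicant of a CNF `Φ` given a CNF theory `Th`. -/
def UPImplicant {V : Type*} [DecidableEq V] (Th Φ : Finset (Finset (V × Bool)))
    (t : Finset (V × Bool)) : Prop :=
  ∀ δ ∈ Φ, ∃ ℓ ∈ δ, UPDeriv (Th ∪ t.image (fun l => ({l} : Finset (V × Bool)))) ℓ

/-- The majority-vote classifier on a list of CNF formulas: true at `v` iff strictly
more than half of the formulas are satisfied by `v`. -/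
def majSat {V : Type*} (Φs : List (Finset (Finset (V × Bool)))) (v : V → Bool) : Bool :=
  decide (Φs.length < 2 * Φs.countP (fun Φ => decide (satCNF v Φ)))

theorem upderiv_sound_aux {V : Type*} (Th : Finset (Finset (V × Bool))) (v : V → Bool)
    (hv : satCNF v Th) (l : V × Bool) (h : UPDeriv Th l) : satLit v l := by
  induction h with
  | step δ l hδ _ ih =>
    obtain ⟨k, hk, hs⟩ := hv δ hδ
    by_cases e : k = l
    · exact e ▸ hs
    · have := ih k hk e
      simp [satLit, litCompl] at this hs
      simp [hs] at this

theorem card_le_countP_aux {α : Type*} (l : List α) (p : α → Bool) (I : Finset (Fin l.length))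
    (h : ∀ i ∈ I, p (l.get i) = true) : I.card ≤ l.countP p := by
  have e : l.countP p = (Finset.univ.filter (fun i : Fin l.length => p (l.get i) = true)).card := by
    have h1 : ((Finset.univ : Finset (Fin l.length)).val.map l.get) = (l : Multiset α) := by
      rw [Fin.univ_val_map, List.ofFn_get]
    have h2 := congrArg (Multiset.countP (fun a => p a = true)) h1
    rw [Multiset.countP_map, Multiset.coe_countP] at h2
    simpa [Finset.card_def] using h2.symm
  rw [e]
  exact Finset.card_le_card (fun i hi => by simpa using h i hi)

/-- A UP-majoritary reason is an abductive explanation: if the assignment `x` is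
classified positively by the majority vote of the CNFs `Φ₁, …, Φ_m`, and `t` is a term
satisfied by `x` that is a UP-implicant given `Th` of at least `⌊m/2⌋ + 1` of the `Φᵢ`,
then every assignment satisfying `t` and `Th` is classified positively by the majority
vote; in particular `t` is an abductive explanation for `x` given the classifier and
`Th`. -/
theorem up_majoritary_reason_is_abductive {V : Type*} [DecidableEq V]
    (Φs : List (Finset (Finset (V × Bool)))) (Th : Finset (Finset (V × Bool)))
    (x : V → Bool) (t : Finset (V × Bool))
    (hx : majSat Φs x = true)
    (hxt : satTerm x t)
    (hUP : ∃ I : Finset (Fin Φs.length), Φs.length / 2 + 1 ≤ I.card ∧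
      ∀ i ∈ I, UPImplicant Th (Φs.get i) t) :
    ∀ v : V → Bool, satTerm v t → satCNF v Th → majSat Φs v = true := by
  intro v hvt hvTh
  obtain ⟨I, hI, hU⟩ := hUP
  have hsat : satCNF v (Th ∪ t.image (fun l => ({l} : Finset (V × Bool)))) := by
    intro δ hδ
    rcases Finset.mem_union.1 hδ with h | h
    · exact hvTh δ h
    · obtain ⟨l, hl, rfl⟩ := Finset.mem_image.1 h
      exact ⟨l, Finset.mem_singleton_self l, hvt l hl⟩
  have := card_le_countP_aux Φs (fun Φ => decide (satCNF v Φ)) I (fun i hi => by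
    refine decide_eq_true ?_
    intro δ hδ
    obtain ⟨l, hl, hd⟩ := hU i hi δ hδ
    exact ⟨l, hl, upderiv_sound_aux _ v hsat l hd⟩)
  unfold majSat
  refine decide_eq_true ?_
  omega
end

section
/- Existence of UP-majoritary reasons (correctness of the greedy procedure of Proposition 1): let Φ₁, …, Φ_m be CNF formulas over X in which no clause is valid (no clause contains both polarities of a variable), let Th be a CNF theory over X, and let x be an assignment satisfying Th that satisfies at least ⌊m/2⌋ + 1 of the Φᵢ. Let t_x be the complete term of x (containing, for each variable of X, the literal satisfied by x). Then there exists a term t ⊆ t_x such that t is a UP-implicant given Th of at least ⌊m/2⌋ + 1 of the Φᵢ, and for every literal ℓ ∈ t, the term t \ {ℓ} is not a UP-implicant given Th of at least ⌊m/2⌋ + 1 of the Φᵢ. -/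
/-- A clause is valid iff it contains both polarities of some variable. -/
def validClause {V : Type*} (δ : Finset (V × Bool)) : Prop :=
  ∃ x : V, (x, true) ∈ δ ∧ (x, false) ∈ δ

/-- The complete term of an assignment `x`: for each variable, the literal satisfied
by `x`. -/
def completeTerm {V : Type*} [DecidableEq V] [Fintype V] (x : V → Bool) :
    Finset (V × Bool) :=
  Finset.univ.image (fun a => (a, x a))

/-- `t` is a UP-implicant given `Th` of at least `⌊m/2⌋ + 1` of the CNFs `Φ₁, …, Φ_m`. -/
def UPMajImplicant {V : Type*} [DecidableEq V] (Th : Finset (Finset (V × Bool)))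
    (Φs : List (Finset (Finset (V × Bool)))) (t : Finset (V × Bool)) : Prop :=
  ∃ I : Finset (Fin Φs.length), Φs.length / 2 + 1 ≤ I.card ∧
    ∀ i ∈ I, UPImplicant Th (Φs.get i) t

/-- Existence of UP-majoritary reasons (correctness of the greedy procedure): if no
clause of any `Φᵢ` is valid, `x` satisfies `Th`, and `x` satisfies at least `⌊m/2⌋ + 1`
of the `Φᵢ`, then there is a term `t ⊆ t_x` that is a UP-implicant given `Th` of at
least `⌊m/2⌋ + 1` of the `Φᵢ`, and such that removing any literal of `t` destroys this
property. -/
theorem exists_up_majoritary_reason {V : Type*} [DecidableEq V] [Fintype V]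
    (Φs : List (Finset (Finset (V × Bool)))) (Th : Finset (Finset (V × Bool)))
    (hval : ∀ Φ ∈ Φs, ∀ δ ∈ Φ, ¬ validClause δ)
    (x : V → Bool) (hxTh : satCNF x Th)
    (hmaj : Φs.length / 2 + 1 ≤ Φs.countP (fun Φ => decide (satCNF x Φ))) :
    ∃ t : Finset (V × Bool), t ⊆ completeTerm x ∧ UPMajImplicant Th Φs t ∧
      ∀ ℓ ∈ t, ¬ UPMajImplicant Th Φs (t.erase ℓ) := by
  classical
  have h0 : UPMajImplicant Th Φs (completeTerm x) := by
    refine ⟨Finset.univ.filter (fun i => satCNF x (Φs.get i)), ?_, ?_⟩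
    · refine hmaj.trans (le_of_eq ?_)
      have h := Fin.univ_val_map Φs.get
      rw [List.ofFn_get] at h
      have h2 := congrArg (Multiset.countP (fun Φ => satCNF x Φ)) h
      rw [Multiset.countP_map, Multiset.coe_countP] at h2
      rw [← h2]
      rfl
    · intro i hi δ hδ
      obtain ⟨ℓ, hℓ, hs⟩ := (Finset.mem_filter.1 hi).2 δ hδ
      refine ⟨ℓ, hℓ, UPDeriv.step {ℓ} ℓ ?_ ?_⟩
      · refine Finset.mem_union_right _ (Finset.mem_image.2 ⟨ℓ, ?_, rfl⟩)
        exact Finset.mem_image.2 ⟨ℓ.1, Finset.mem_univ _, Prod.ext rfl hs⟩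
      · intro l hl hne
        exact absurd (Finset.mem_singleton.1 hl) hne
  have key : ∀ (n : ℕ) (t : Finset (V × Bool)), t.card = n → t ⊆ completeTerm x →
      UPMajImplicant Th Φs t → ∃ t : Finset (V × Bool), t ⊆ completeTerm x ∧
        UPMajImplicant Th Φs t ∧ ∀ ℓ ∈ t, ¬ UPMajImplicant Th Φs (t.erase ℓ) := by
    intro n
    induction n with
    | zero =>
      intro t hc hs hm
      refine ⟨t, hs, hm, fun ℓ hℓ => ?_⟩
      rw [Finset.card_eq_zero.1 hc] at hℓ
      simp at hℓ
    | succ n ih =>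
      intro t hc hs hm
      by_cases h : ∀ ℓ ∈ t, ¬ UPMajImplicant Th Φs (t.erase ℓ)
      · exact ⟨t, hs, hm, h⟩
      · push Not at h
        obtain ⟨ℓ, hℓ, h⟩ := h
        exact ih _ (by rw [Finset.card_erase_of_mem hℓ, hc]; rfl)
          ((Finset.erase_subset _ _).trans hs) h
  exact key _ _ rfl subset_rfl h0
end

section
/- Correctness of branch-wise rectification of a decision tree by a positive classification rule: let T be a decision tree over X, b a consistent term over X, and Th a Boolean function over X. Let T' be the decision tree obtained from T by replacing, for every 0-path p of T whose associated term p is such that some assignment satisfies p, b and Th simultaneously, the 0-leaf of p by the comb-shaped tree patch(p, b ⇒ y). Then for every assignment v satisfying Th, T'(v) = true if and only if T(v) = true or v satisfies b; that is, modulo Th, T' computes the rectification T ∨ b of T by the rule b ⇒ y. -/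
/-- A term is consistent iff it contains no variable with both polarities. -/
def consistentTerm {V : Type*} (t : Finset (V × Bool)) : Prop :=
  ¬ ∃ x : V, (x, true) ∈ t ∧ (x, false) ∈ t

/-- A (binary) decision tree over variables `V`. -/
inductive DTree (V : Type*) where
  | leaf (b : Bool)
  | node (x : V) (l r : DTree V)

/-- The value of a decision tree on an assignment: at each internal node labelled `x`,
follow the right subtree if `v x = true` and the left subtree otherwise. -/
def DTree.eval {V : Type*} : DTree V → (V → Bool) → Bool
  | .leaf b, _ => b
  | .node x l r, v => if v x then r.eval v else l.eval v

/-- The comb-shaped decision tree testing in sequence the given literals, reaching a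
leaf labelled `true` if all of them are satisfied, and a leaf labelled `false` as soon
as one of them is falsified. -/
def comb {V : Type*} : List (V × Bool) → DTree V
  | [] => .leaf true
  | ℓ :: ls => if ℓ.2 then .node ℓ.1 (.leaf false) (comb ls)
               else .node ℓ.1 (comb ls) (.leaf false)

open Classical in
/-- Branch-wise rectification of a decision tree by the positive classification rule
`b ⇒ y`: every `0`-leaf whose path term `p` is such that some assignment satisfies
`p`, `b` and `Th` simultaneously is replaced by the comb-shaped tree
`patch(p, b ⇒ y)`, which tests the literals of `b` not occurring in `p`. The second
argument accumulates the term of the current path. -/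
noncomputable def rectifyPos {V : Type*} [DecidableEq V]
    (Th : (V → Bool) → Bool) (b : Finset (V × Bool)) :
    DTree V → Finset (V × Bool) → DTree V
  | .leaf true, _ => .leaf true
  | .leaf false, p =>
      if ∃ v : V → Bool, satTerm v p ∧ satTerm v b ∧ Th v = true then comb (b \ p).toList
      else .leaf false
  | .node x l r, p =>
      .node x (rectifyPos Th b l (insert (x, false) p))
              (rectifyPos Th b r (insert (x, true) p))

theorem comb_eval_aux {V : Type*} (v : V → Bool) (L : List (V × Bool)) :
    (comb L).eval v = true ↔ ∀ l ∈ L, satLit v l := by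
  induction L with
  | nil => simp [comb, DTree.eval]
  | cons a L ih =>
    obtain ⟨x, c⟩ := a
    cases c <;> cases hx : v x <;> simp [comb, DTree.eval, satLit, hx] <;>
      simpa [satLit] using ih

theorem rectifyPos_aux {V : Type*} [DecidableEq V]
    (b : Finset (V × Bool)) (Th : (V → Bool) → Bool) (v : V → Bool) (hv : Th v = true)
    (T : DTree V) : ∀ p : Finset (V × Bool), satTerm v p →
      ((rectifyPos Th b T p).eval v = true ↔ (T.eval v = true ∨ satTerm v b)) := by
  induction T with
  | leaf c =>
    intro p hp
    cases c with
    | true => simp [rectifyPos, DTree.eval]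
    | false =>
      rw [rectifyPos]
      split_ifs with h
      · rw [comb_eval_aux]
        simp only [DTree.eval, Finset.mem_toList, Finset.mem_sdiff]
        constructor
        · intro H
          right
          intro l hl
          by_cases hlp : l ∈ p
          · exact hp l hlp
          · exact H l ⟨hl, hlp⟩
        · rintro (H | H) l hl
          · cases H
          · exact H l hl.1
      · simp only [DTree.eval]
        constructor
        · intro H
          cases H
        · rintro (H | H)
          · exact H
          · exact absurd ⟨v, hp, H, hv⟩ h
  | node x l r ihl ihr =>
    intro p hp
    have key : ∀ c, v x = c → satTerm v (insert (x, c) p) := by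
      intro c hc l hl
      rcases Finset.mem_insert.1 hl with rfl | hl
      · exact hc
      · exact hp l hl
    rw [rectifyPos]
    cases hx : v x
    · simpa [DTree.eval, hx] using ihl _ (key _ hx)
    · simpa [DTree.eval, hx] using ihr _ (key _ hx)

/-- Correctness of branch-wise rectification of a decision tree by a positive
classification rule: modulo `Th`, the rectified tree computes `T ∨ b`, i.e., for every
assignment `v` satisfying `Th`, `T'(v) = true` iff `T(v) = true` or `v` satisfies
`b`. -/
theorem rectifyPos_correct {V : Type*} [DecidableEq V]
    (T : DTree V) (b : Finset (V × Bool)) (hb : consistentTerm b)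
    (Th : (V → Bool) → Bool) :
    ∀ v : V → Bool, Th v = true →
      ((rectifyPos Th b T ∅).eval v = true ↔ (T.eval v = true ∨ satTerm v b)) := by
  intro v hv
  exact rectifyPos_aux b Th v hv T ∅ (by intro l hl; simp at hl)
end
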